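/- Let g be piecewise quadratic with breakpoints -∞ = τ₀ < ... < τ_N = +∞ and strongly convex pieces p₁, ..., p_N satisfying g(α) = min_{1 ≤ k ≤ N} p_k(α) for all α (consistency). For β ∈ ℝ, suppose α*(β) ∈ argmax_α {βα - g(α)} with τ_{k*-1} ≤ α*(β) ≤ τ_{k*}, and suppose consecutive pieces are not identical as polynomials. Then α*(β) ∉ {τ_{k*-1}, τ_{k*}}, i.e., the maximizer lies strictly inside the piece interval. -/

import Mathlib

/-- If `a x² + b x + c - β x` with `a > 0` is minimized at `t`, its derivative vanishes there. -/
theorem quadratic_deriv_eq_of_forall_le {a b c β t : ℝ} (ha : 0 < a)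
    (h : ∀ x : ℝ, β * x - (a * x ^ 2 + b * x + c) ≤ β * t - (a * t ^ 2 + b * t + c)) :
    2 * a * t + b = β := by
  set d := 2 * a * t + b - β with hd
  have hx := h (t - d / (2 * a))
  have key : a * (t - d / (2 * a)) ^ 2 + b * (t - d / (2 * a)) - β * (t - d / (2 * a))
      - (a * t ^ 2 + b * t - β * t) = -(d ^ 2 / (4 * a)) := by
    rw [hd]
    field_simp
    ring
  have hle : d ^ 2 / (4 * a) ≤ 0 := by linarith
  have hsq : d ^ 2 ≤ 0 := by
    rwa [div_le_iff₀ (by positivity), zero_mul] at hle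
  have : d = 0 := by nlinarith
  linarith

/-- A maximizer `t` of `β x - g x` cannot be the common endpoint of two intervals on which `g`
equals distinct strongly convex quadratics that both dominate `g` globally. -/
theorem quadratic_coeffs_eq_of_maximizer {g : ℝ → ℝ} {a b c a' b' c' β l t r : ℝ}
    (ha : 0 < a) (ha' : 0 < a') (hl : l < t) (hr : t < r)
    (hgl : g l = a * l ^ 2 + b * l + c) (hgr : g r = a' * r ^ 2 + b' * r + c')
    (hgt : g t = a * t ^ 2 + b * t + c) (hgt' : g t = a' * t ^ 2 + b' * t + c')
    (hmin : ∀ x, g x ≤ a * x ^ 2 + b * x + c) (hmin' : ∀ x, g x ≤ a' * x ^ 2 + b' * x + c')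
    (hopt : ∀ x, β * x - g x ≤ β * t - g t) :
    (a, b, c) = (a', b', c') := by
  have hb : 2 * a * t + b = β := quadratic_deriv_eq_of_forall_le (c := c) ha fun x => by
    linarith [hopt x, hmin x]
  have hb' : 2 * a' * t + b' = β := quadratic_deriv_eq_of_forall_le (c := c') ha' fun x => by
    linarith [hopt x, hmin' x]
  have hdiff : ∀ x, a * x ^ 2 + b * x + c - (a' * x ^ 2 + b' * x + c') =
      (a - a') * (x - t) ^ 2 := fun x => by
    linear_combination (x - t) * (hb - hb') - hgt + hgt'
  have hle : a ≤ a' := by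
    have h : (a - a') * (l - t) ^ 2 ≤ 0 := by linarith [hdiff l, hmin' l]
    have hpos : 0 < (l - t) ^ 2 := sq_pos_of_neg (sub_neg.2 hl)
    by_contra! hlt
    linarith [mul_pos (sub_pos.2 hlt) hpos]
  have hge : a' ≤ a := by
    have h : 0 ≤ (a - a') * (r - t) ^ 2 := by linarith [hdiff r, hmin r]
    have hpos : 0 < (r - t) ^ 2 := pow_pos (sub_pos.2 hr) 2
    by_contra! hlt
    linarith [mul_pos (sub_pos.2 hlt) hpos]
  obtain rfl : a = a' := le_antisymm hle hge
  obtain rfl : b = b' := by linarith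
  obtain rfl : c = c' := by linarith
  rfl

/-- For a consistent piecewise quadratic `g` (strongly convex quadratic pieces,
`g = min` of the pieces, adjacent pieces non-identical), any maximizer of
`βα - g(α)` lying in the `k*`-th piece interval lies strictly inside it. -/
theorem stmt_13 (N : ℕ) (hN : 0 < N)
    (τ : Fin (N + 1) → EReal) (hτ : StrictMono τ)
    (hτ0 : τ 0 = ⊥) (hτN : τ (Fin.last N) = ⊤)
    (a b c : Fin N → ℝ) (ha : ∀ k, 0 < a k)
    (g : ℝ → ℝ)
    (hagree : ∀ (k : Fin N) (α : ℝ), τ k.castSucc ≤ (α : EReal) → (α : EReal) ≤ τ k.succ →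
      g α = a k * α ^ 2 + b k * α + c k)
    (hmin : ∀ (α : ℝ) (k : Fin N), g α ≤ a k * α ^ 2 + b k * α + c k)
    (hdist : ∀ i j : Fin N, (i : ℕ) + 1 = (j : ℕ) → (a i, b i, c i) ≠ (a j, b j, c j))
    (β αstar : ℝ) (kstar : Fin N)
    (hopt : ∀ α : ℝ, β * α - g α ≤ β * αstar - g αstar)
    (hlo : τ kstar.castSucc ≤ (αstar : EReal)) (hhi : (αstar : EReal) ≤ τ kstar.succ) :
    (αstar : EReal) ≠ τ kstar.castSucc ∧ (αstar : EReal) ≠ τ kstar.succ := by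
  have interior : ∀ i j : Fin N, (i : ℕ) + 1 = (j : ℕ) → (αstar : EReal) ≠ τ i.succ := by
    intro i j hij ht
    have hidx : i.succ = j.castSucc := Fin.ext hij
    have ht' : (αstar : EReal) = τ j.castSucc := hidx ▸ ht
    have hli : τ i.castSucc < αstar := ht ▸ hτ i.castSucc_lt_succ
    have hrj : αstar < τ j.succ := ht' ▸ hτ j.castSucc_lt_succ
    obtain ⟨l, hl, hlt⟩ := EReal.lt_iff_exists_real_btwn.1 hli
    obtain ⟨r, hrt, hr⟩ := EReal.lt_iff_exists_real_btwn.1 hrj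
    exact hdist i j hij <| quadratic_coeffs_eq_of_maximizer (ha i) (ha j)
      (EReal.coe_lt_coe_iff.1 hlt) (EReal.coe_lt_coe_iff.1 hrt)
      (hagree i l hl.le (hlt.le.trans ht.le)) (hagree j r (ht'.ge.trans hrt.le) hr.le)
      (hagree i αstar hli.le ht.le) (hagree j αstar ht'.ge hrj.le)
      (fun x => hmin x i) (fun x => hmin x j) hopt
  constructor
  · intro h
    rcases Nat.eq_zero_or_pos (kstar : ℕ) with h0 | hpos
    · have : kstar.castSucc = 0 := Fin.ext h0
      rw [this, hτ0] at h
      exact EReal.coe_ne_bot _ h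
    · let i : Fin N := ⟨kstar - 1, by omega⟩
      have hi : (i : ℕ) + 1 = kstar := Nat.sub_add_cancel hpos
      have hidx : i.succ = kstar.castSucc := Fin.ext hi
      exact interior i kstar hi (hidx ▸ h)
  · intro h
    by_cases hk : (kstar : ℕ) + 1 < N
    · exact interior kstar ⟨kstar + 1, hk⟩ rfl h
    · have : kstar.succ = Fin.last N := Fin.ext (by simp only [Fin.val_succ, Fin.val_last]; omega)
      rw [this, hτN] at h
      exact EReal.coe_ne_top _ h
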